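/- Let K be an imaginary quadratic field with fundamental discriminant D whose distinct prime divisors are p1, …, pt (ordered so that p_t = 2 if 2 | D), and let R be the Rédei matrix of K. Then the map sending d to X_d = (v_{p1}(d), …, v_{pt}(d))^T is a group isomorphism from D(K) ∩ N(K^×) (with operation ⊙) onto {X ∈ F_2^t : R·X = 0}, with inverse (x1, …, xt)^T ↦ Π p_i^{x_i}. -/

import Mathlib

open NumberField

open Classical in
/-- The additive Legendre symbol `[a/p] ∈ F₂`: `0` if `a` is a square mod `p`, `1` otherwise. -/
noncomputable def aLeg (a : ℤ) (p : ℕ) : ZMod 2 :=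
  if IsSquare ((a : ZMod p)) then 0 else 1

/-- The group operation on positive squarefree divisors: `d₁ ⊙ d₂ = d₁·d₂/gcd(d₁,d₂)²`. -/
def dOdot (d₁ d₂ : ℕ) : ℕ := d₁ * d₂ / Nat.gcd d₁ d₂ ^ 2

/-- The Rédei matrix of a quadratic field with discriminant `D` and prime divisors
`p₁, …, p_t` of `D`: the `(t−1) × t` matrix over `F₂` with `r_{ii} = [(D/p_i^*)/p_i]` and
`r_{ij} = [p_j/p_i]` for `i ≠ j`, where `p_i^* = (−1)^{(p_i−1)/2}·p_i`. -/
noncomputable def redeiMatrix (D : ℤ) (t : ℕ) (p : Fin t → ℕ) :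
    Matrix (Fin (t - 1)) (Fin t) (ZMod 2) :=
  Matrix.of fun i j =>
    let i' : Fin t := i.castLE (Nat.sub_le t 1)
    if (i' : ℕ) = (j : ℕ) then
      aLeg (D / ((-1) ^ ((p i' - 1) / 2) * (p i' : ℤ))) (p i')
    else aLeg (p j) (p i')

/-!
Over `ℚ`, the norm form of a quadratic field of discriminant `D` is equivalent to
`u ^ 2 - D * v ^ 2`. By Legendre's theorem on `a * x ^ 2 + b * y ^ 2 + c * z ^ 2 = 0`, a squarefree
divisor `d > 0` of `D` is therefore a norm if and only if the (additive) Hilbert symbols of `D` and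
`d` vanish at every odd prime dividing `D`. The row of `R` at `p i`, applied to `X_d`, is precisely
the Hilbert symbol at `p i`. The rows omit only the last prime: if it is `2`, Legendre's criterion
does not need it, and if `D` is odd, quadratic reciprocity, in the form of the product formula,
shows that the symbol there vanishes once all others do.
-/

lemma exists_ne_zero_abs_le_map_eq_zero {ι G : Type*} [Fintype ι] [AddGroup G] [Finite G]
    (f : (ι → ℤ) →+ G) (n : ι → ℕ) (hn : Nat.card G < ∏ i, (n i + 1)) :
    ∃ x : ι → ℤ, x ≠ 0 ∧ (∀ i, |x i| ≤ n i) ∧ f x = 0 := by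
  classical
  have : Fintype G := Fintype.ofFinite G
  have hcard : Fintype.card G < Fintype.card (∀ i, Fin (n i + 1)) := by
    simpa only [Fintype.card_pi, Fintype.card_fin, ← Nat.card_eq_fintype_card (α := G)] using hn
  obtain ⟨k, l, hkl, hf⟩ := Fintype.exists_ne_map_eq_of_card_lt
    (fun k : ∀ i, Fin (n i + 1) ↦ f fun i ↦ ((k i : ℕ) : ℤ)) hcard
  refine ⟨(fun i ↦ ((k i : ℕ) : ℤ)) - fun i ↦ ((l i : ℕ) : ℤ), fun h ↦ hkl ?_, fun i ↦ ?_, ?_⟩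
  · funext i
    have := congrFun h i
    simp only [Pi.sub_apply, Pi.zero_apply] at this
    omega
  · rw [Pi.sub_apply, abs_le]
    omega
  · rw [map_sub, sub_eq_zero]
    exact hf

lemma exists_small_solution_legendre_congruences {a b c : ℕ} (ha : 0 < a) (hb : 0 < b)
    (hc : 0 < c) (u v w : ℤ) :
    ∃ x y z : ℤ, (x ≠ 0 ∨ y ≠ 0 ∨ z ≠ 0) ∧ x ^ 2 ≤ b * c ∧ y ^ 2 ≤ a * c ∧ z ^ 2 ≤ a * b ∧
      (a : ℤ) ∣ b * y - u * z ∧ (b : ℤ) ∣ a * x - v * z ∧ (c : ℤ) ∣ a * x - w * y := by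
  have : NeZero a := ⟨ha.ne'⟩
  have : NeZero b := ⟨hb.ne'⟩
  have : NeZero c := ⟨hc.ne'⟩
  let f : (Fin 3 → ℤ) →+ ZMod a × ZMod b × ZMod c :=
    { toFun x := (((b * x 1 - u * x 2 : ℤ) : ZMod a), ((a * x 0 - v * x 2 : ℤ) : ZMod b),
        ((a * x 0 - w * x 1 : ℤ) : ZMod c))
      map_zero' := by simp
      map_add' x y := by
        simp only [Pi.add_apply, Prod.mk_add_mk, ← Int.cast_add]
        congr 3 <;> ring }
  have hcard : Nat.card (ZMod a × ZMod b × ZMod c) <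
      ∏ i, ((![(b * c).sqrt, (a * c).sqrt, (a * b).sqrt] : Fin 3 → ℕ) i + 1) := by
    simp only [Nat.card_prod, Nat.card_zmod, Fin.prod_univ_three, Matrix.cons_val]
    rw [← Nat.pow_lt_pow_iff_left two_ne_zero]
    calc (a * (b * c)) ^ 2 = (b * c) * (a * c) * (a * b) := by ring
      _ < ((b * c).sqrt + 1) ^ 2 * ((a * c).sqrt + 1) ^ 2 * ((a * b).sqrt + 1) ^ 2 := by
        gcongr <;> exact Nat.lt_succ_sqrt' _
      _ = _ := by ring
  obtain ⟨x, hx, hle, hfx⟩ := exists_ne_zero_abs_le_map_eq_zero f _ hcard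
  have sq_le {t : ℤ} {k : ℕ} (h : |t| ≤ k.sqrt) : t ^ 2 ≤ (k : ℤ) := by
    rw [← sq_abs]
    exact (pow_le_pow_left₀ (abs_nonneg t) h 2).trans (mod_cast Nat.sqrt_le' k)
  simp only [f, AddMonoidHom.coe_mk, ZeroHom.coe_mk, Prod.mk_eq_zero,
    ZMod.intCast_zmod_eq_zero_iff_dvd] at hfx
  refine ⟨x 0, x 1, x 2, ?_, mod_cast sq_le (hle 0), mod_cast sq_le (hle 1),
    mod_cast sq_le (hle 2), hfx⟩
  by_contra! h
  exact hx (funext fun i ↦ by fin_cases i <;> simp [h])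

lemma dvd_mul_sq_sub_mul_sq {R : Type*} [CommRing R] {a b c u y z : R} (hab : IsCoprime a b)
    (hu : a ∣ u ^ 2 - b * c) (h : a ∣ b * y - u * z) : a ∣ b * y ^ 2 - c * z ^ 2 := by
  apply hab.dvd_of_dvd_mul_left
  rw [show b * (b * y ^ 2 - c * z ^ 2) =
    (b * y - u * z) * (b * y + u * z) + (u ^ 2 - b * c) * z ^ 2 by ring]
  exact dvd_add (h.mul_right _) (hu.mul_right _)

lemma sq_lt_of_squarefree {k z : ℤ} (hk : Squarefree k) (hk1 : k ≠ 1) (hz : z ^ 2 ≤ k) :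
    z ^ 2 < k := by
  refine hz.lt_of_ne fun h ↦ hk1 ?_
  have hz1 := Int.isUnit_iff.mp (hk z ⟨1, by rw [← h]; ring⟩)
  rcases hz1 with rfl | rfl <;> simp [← h]

lemma mul_dvd_ternary_form {R : Type*} [CommRing R] {a b c u v w x y z : R}
    (hab : IsCoprime a b) (habc : IsCoprime (a * b) c) (hu : a ∣ u ^ 2 - b * c)
    (hv : b ∣ v ^ 2 - a * c) (hw : c ∣ w ^ 2 + a * b) (hua : a ∣ b * y - u * z)
    (hvb : b ∣ a * x - v * z) (hwc : c ∣ a * x - w * y) :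
    a * b * c ∣ a * x ^ 2 + b * y ^ 2 - c * z ^ 2 := by
  refine habc.mul_dvd (hab.mul_dvd ?_ ?_) ?_
  · rw [add_sub_assoc]
    exact dvd_add (dvd_mul_right _ _) (dvd_mul_sq_sub_mul_sq hab hu hua)
  · rw [add_sub_right_comm]
    exact dvd_add (dvd_mul_sq_sub_mul_sq hab.symm hv hvb) (dvd_mul_right _ _)
  · have := dvd_mul_sq_sub_mul_sq (c := -b) habc.of_mul_left_left.symm (by simpa using hw) hwc
    exact dvd_sub (by simpa using this) (dvd_mul_right _ _)

lemma exists_pos_ternary_zero_of_ne_one {a b c : ℤ} (hsq : Squarefree (a * b * c)) (ha : 0 < a)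
    (hb : 0 < b) (hc : 0 < c) (hab1 : a * b ≠ 1) (hA : ∃ u, a ∣ u ^ 2 - b * c)
    (hB : ∃ v, b ∣ v ^ 2 - a * c) (hC : ∃ w, c ∣ w ^ 2 + a * b) :
    ∃ x y z : ℤ, (x ≠ 0 ∨ y ≠ 0 ∨ z ≠ 0) ∧ a * x ^ 2 + b * y ^ 2 = c * z ^ 2 := by
  obtain ⟨u, hu⟩ := hA
  obtain ⟨v, hv⟩ := hB
  obtain ⟨w, hw⟩ := hC
  lift a to ℕ using ha.le
  lift b to ℕ using hb.le
  lift c to ℕ using hc.le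
  obtain ⟨x, y, z, hne, hx, hy, hz, hua, hvb, hwc⟩ :=
    exists_small_solution_legendre_congruences (mod_cast ha) (mod_cast hb) (mod_cast hc) u v w
  obtain ⟨hrel_c, hsq_ab, -⟩ := squarefree_mul_iff.mp hsq
  obtain ⟨k, hk⟩ := mul_dvd_ternary_form (squarefree_mul_iff.mp hsq_ab).1.isCoprime
    hrel_c.isCoprime hu hv hw hua hvb hwc
  have hz_lt : z ^ 2 < a * b := sq_lt_of_squarefree hsq_ab hab1 hz
  have hxy_lt : a * x ^ 2 + b * y ^ 2 < 2 * (a * b * c) := by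
    have hbc_or_hac : (b * c : ℤ) ≠ 1 ∨ (a * c : ℤ) ≠ 1 := by
      by_contra! ⟨hbc, hac⟩
      have := Int.eq_one_or_neg_one_of_mul_eq_one hbc
      have := Int.eq_one_or_neg_one_of_mul_eq_one hac
      exact hab1 (by rw [show (a : ℤ) = 1 by omega, show (b : ℤ) = 1 by omega, one_mul])
    rcases hbc_or_hac with hbc | hac
    · have := sq_lt_of_squarefree (hsq.squarefree_of_dvd ⟨a, by ring⟩) hbc hx
      nlinarith
    · have := sq_lt_of_squarefree (hsq.squarefree_of_dvd ⟨b, by ring⟩) hac hy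
      nlinarith
  have habc : (0 : ℤ) < a * b * c := by positivity
  have hxy_nonneg : (0 : ℤ) ≤ a * x ^ 2 + b * y ^ 2 := by positivity
  have hk_lower : -1 < k := by nlinarith [hxy_nonneg]
  have hk_upper : k < 2 := by nlinarith [mul_nonneg hc.le (sq_nonneg z)]
  obtain rfl | rfl : k = 0 ∨ k = 1 := by omega
  · exact ⟨x, y, z, hne, by linarith⟩
  · -- Composing with the form `X² + ab` turns a value `abc` of the ternary form into a zero.
    refine ⟨x * z + b * y, y * z - a * x, z ^ 2 + a * b, .inr (.inr (by positivity)), ?_⟩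
    linear_combination (z ^ 2 + a * b : ℤ) * hk

lemma exists_pos_ternary_zero {a b c : ℤ} (hsq : Squarefree (a * b * c)) (ha : 0 < a)
    (hb : 0 < b) (hc : 0 < c) (hA : ∃ u, a ∣ u ^ 2 - b * c) (hB : ∃ v, b ∣ v ^ 2 - a * c)
    (hC : ∃ w, c ∣ w ^ 2 + a * b) :
    ∃ x y z : ℤ, (x ≠ 0 ∨ y ≠ 0 ∨ z ≠ 0) ∧ a * x ^ 2 + b * y ^ 2 = c * z ^ 2 := by
  by_cases hab : a * b = 1
  · obtain rfl : a = 1 := by have := Int.eq_one_or_neg_one_of_mul_eq_one hab; omega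
    obtain rfl : b = 1 := by simpa using hab
    lift c to ℕ using hc.le
    obtain ⟨w, hw⟩ := hC
    have : IsSquare (-1 : ZMod c) := by
      refine ⟨w, ?_⟩
      have := (ZMod.intCast_zmod_eq_zero_iff_dvd _ c).mpr hw
      push_cast at this
      linear_combination -this
    obtain ⟨x, y, hxy⟩ := Nat.eq_sq_add_sq_of_isSquare_mod_neg_one this
    exact ⟨x, y, 1, by simp, by simp [hxy]⟩
  · exact exists_pos_ternary_zero_of_ne_one hsq ha hb hc hab hA hB hC

theorem exists_ternary_zero {a b c : ℤ} (hsq : Squarefree (a * b * c)) (hac : a * c < 0)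
    (hA : ∃ u, a ∣ u ^ 2 + b * c) (hB : ∃ v, b ∣ v ^ 2 + a * c) (hC : ∃ w, c ∣ w ^ 2 + a * b) :
    ∃ x y z : ℤ, (x ≠ 0 ∨ y ≠ 0 ∨ z ≠ 0) ∧ a * x ^ 2 + b * y ^ 2 + c * z ^ 2 = 0 := by
  have ha0 : a ≠ 0 := by rintro rfl; simp at hac
  wlog ha : 0 < a generalizing a b c
  · obtain ⟨x, y, z, hne, h⟩ := this (a := -a) (b := -b) (c := -c)
      (hsq.squarefree_of_dvd ⟨-1, by ring⟩) (by simpa using hac) (by simpa using hA)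
      (by simpa using hB) (by simpa using hC) (by simpa using ha0)
      (neg_pos.mpr (lt_of_le_of_ne (not_lt.mp ha) ha0))
    exact ⟨x, y, z, hne, by linarith⟩
  have hc : c < 0 := by nlinarith
  have hb0 : b ≠ 0 := by rintro rfl; simp at hsq
  rcases hb0.lt_or_gt with hb | hb
  · obtain ⟨y, z, x, hne, h⟩ := exists_pos_ternary_zero (a := -b) (b := -c) (c := a)
      (hsq.squarefree_of_dvd ⟨1, by ring⟩) (by linarith) (by linarith) ha
      (by simpa [mul_comm] using hB) (by simpa [mul_comm] using hC) (by simpa using hA)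
    exact ⟨x, y, z, by tauto, by linarith⟩
  · obtain ⟨x, y, z, hne, h⟩ := exists_pos_ternary_zero (a := a) (b := b) (c := -c)
      (hsq.squarefree_of_dvd ⟨-1, by ring⟩) ha hb (by linarith)
      (by simpa using hA) (by simpa using hB) (by simpa using hC)
    exact ⟨x, y, z, hne, by linarith⟩

/-- The additive Hilbert symbol `[m, d]_p ∈ F₂` for `p ∥ m` odd and `d` squarefree, namely the
tame symbol `[(-1)^(v(m)v(d)) m^v(d) / d^v(m) / p]`. It vanishes for `p = 2`. -/
noncomputable def addHilbertSym (m d : ℤ) (p : ℕ) : ZMod 2 :=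
  if (p : ℤ) ∣ d then aLeg (-(m / p) * (d / p)) p else aLeg d p

section Symbols

lemma aLeg_eq_zero_iff {a : ℤ} {p : ℕ} : aLeg a p = 0 ↔ IsSquare (a : ZMod p) := by
  simp [aLeg]

lemma aLeg_two (a : ℤ) : aLeg a 2 = 0 :=
  aLeg_eq_zero_iff.mpr ((by decide : ∀ k : ZMod 2, IsSquare k) a)

lemma addHilbertSym_two (m d : ℤ) : addHilbertSym m d 2 = 0 := by
  unfold addHilbertSym
  split_ifs <;> exact aLeg_two _

/-- The isomorphism of `F₂` with `{1, -1}`, which turns additive symbols into multiplicative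
ones. -/
def signChar : AddChar (ZMod 2) ℤ := AddChar.zmodChar 2 (ζ := -1) (by norm_num)

lemma signChar_injective : Function.Injective signChar := by decide

lemma signChar_aLeg {p : ℕ} [Fact p.Prime] {a : ℤ} (ha : (a : ZMod p) ≠ 0) :
    signChar (aLeg a p) = legendreSym p a := by
  by_cases hsq : IsSquare (a : ZMod p)
  · rw [aLeg_eq_zero_iff.mpr hsq, (legendreSym.eq_one_iff p ha).mpr hsq, AddChar.map_zero_eq_one]
  · rw [aLeg, if_neg hsq, (legendreSym.eq_neg_one_iff p).mpr hsq]
    decide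

lemma aLeg_mul {p : ℕ} [Fact p.Prime] {a b : ℤ} (ha : (a : ZMod p) ≠ 0) (hb : (b : ZMod p) ≠ 0) :
    aLeg (a * b) p = aLeg a p + aLeg b p := by
  apply signChar_injective
  rw [AddChar.map_add_eq_mul, signChar_aLeg (by simp [ha, hb]), signChar_aLeg ha,
    signChar_aLeg hb, legendreSym.mul]

lemma aLeg_mul_sq {p : ℕ} [Fact p.Prime] (a : ℤ) {c : ℤ} (hc : (c : ZMod p) ≠ 0) :
    aLeg (a * c ^ 2) p = aLeg a p := by
  have : IsSquare ((a * c ^ 2 : ℤ) : ZMod p) ↔ IsSquare (a : ZMod p) := by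
    refine ⟨fun ⟨r, hr⟩ ↦ ⟨r / c, ?_⟩, fun h ↦ by simpa using h.mul (IsSquare.sq _)⟩
    push_cast at hr
    field_simp
    linear_combination hr
  unfold aLeg
  split_ifs <;> tauto

lemma aLeg_prod {ι : Type*} {p : ℕ} [Fact p.Prime] (s : Finset ι) (f : ι → ℤ)
    (hf : ∀ i ∈ s, (f i : ZMod p) ≠ 0) : aLeg (∏ i ∈ s, f i) p = ∑ i ∈ s, aLeg (f i) p := by
  classical
  induction s using Finset.induction_on with
  | empty => simp [aLeg]
  | insert i s hi ih =>
    rw [Finset.forall_mem_insert] at hf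
    rw [Finset.prod_insert hi, Finset.sum_insert hi, aLeg_mul hf.1, ih hf.2]
    rw [Int.cast_prod]
    exact Finset.prod_ne_zero_iff.mpr hf.2

lemma addHilbertSym_of_not_dvd {m d : ℤ} {p : ℕ} (h : ¬ (p : ℤ) ∣ d) :
    addHilbertSym m d p = aLeg d p :=
  if_neg h

lemma addHilbertSym_mul_mul {p : ℕ} [hp : Fact p.Prime] {g : ℤ} (hg : Squarefree g)
    (hpg : (p : ℤ) ∣ g) (m d : ℤ) : addHilbertSym (g * m) (g * d) p = aLeg (-(m * d)) p := by
  obtain ⟨g, rfl⟩ := hpg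
  have hp0 : (p : ℤ) ≠ 0 := mod_cast hp.out.ne_zero
  have hg0 : (g : ZMod p) ≠ 0 := by
    rw [Ne, ZMod.intCast_zmod_eq_zero_iff_dvd]
    exact fun h ↦ (Nat.prime_iff_prime_int.mp hp.out).not_isUnit (hg p (mul_dvd_mul_left _ h))
  rw [addHilbertSym, if_pos (by simp [mul_assoc]), mul_assoc, mul_assoc,
    Int.mul_ediv_cancel_left _ hp0, Int.mul_ediv_cancel_left _ hp0, ← aLeg_mul_sq (-(m * d)) hg0]
  ring_nf

lemma addHilbertSym_mul_sq {p : ℕ} [Fact p.Prime] {m c : ℤ} (hpm : (p : ℤ) ∣ m)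
    (hc : (c : ZMod p) ≠ 0) (d : ℤ) : addHilbertSym (m * c ^ 2) d p = addHilbertSym m d p := by
  unfold addHilbertSym
  rw [mul_comm m, Int.mul_ediv_assoc _ hpm, ← aLeg_mul_sq (-(m / p) * (d / p)) hc]
  ring_nf

lemma signChar_sum_aLeg {n : ℕ} (hn : Squarefree n) {a : ℤ} (ha : IsCoprime a n) :
    signChar (∑ p ∈ n.primeFactors, aLeg a p) = jacobiSym a n := by
  have map_sum : signChar (∑ p ∈ n.primeFactors, aLeg a p) =
      ∏ p ∈ n.primeFactors, signChar (aLeg a p) :=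
    map_prod signChar.toMonoidHom (fun p ↦ Multiplicative.ofAdd (aLeg a p)) n.primeFactors
  rw [map_sum]
  conv_rhs => rw [← Nat.prod_primeFactors_of_squarefree hn, ← Finset.prod_toList,
    jacobiSym.list_prod_right fun p hp ↦
      (Nat.prime_of_mem_primeFactors (by simpa using hp)).ne_zero]
  rw [Finset.prod_map_toList]
  refine Finset.prod_congr rfl fun p hp ↦ ?_
  have : Fact p.Prime := ⟨Nat.prime_of_mem_primeFactors hp⟩
  rw [← jacobiSym.legendreSym.to_jacobiSym, signChar_aLeg]
  rw [Ne, ZMod.intCast_zmod_eq_zero_iff_dvd]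
  intro hpa
  have hpn : (p : ℤ) ∣ n := mod_cast Nat.dvd_of_mem_primeFactors hp
  exact (Nat.prime_iff_prime_int.mp Fact.out).not_isUnit (ha.isUnit_of_dvd' hpa hpn)

lemma jacobiSym_mul_jacobiSym_comm {a b : ℕ} (ha : Odd a) (hb : Odd b) (hab : a.Coprime b) :
    jacobiSym a b * jacobiSym b a = if a % 4 = 3 ∧ b % 4 = 3 then -1 else 1 := by
  have hsq : jacobiSym b a * jacobiSym b a = 1 := by
    rw [← sq, jacobiSym.sq_one (Int.gcd_natCast_natCast b a ▸ hab.symm)]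
  rw [← jacobiSym.quadratic_reciprocity_if (Nat.odd_iff.mp ha) (Nat.odd_iff.mp hb)]
  split_ifs
  · rw [neg_mul, hsq]
  · exact hsq

lemma jacobiSym_neg_mul_jacobiSym_natAbs {a : ℕ} {b : ℤ} (hab4 : a * b % 4 = 1)
    (hab : IsCoprime (a : ℤ) b) : jacobiSym (-b) a * jacobiSym a b.natAbs = 1 := by
  have hodd : Odd (a * b) := Int.odd_iff.mpr (by omega)
  obtain ⟨ha, hb⟩ := Int.odd_mul.mp hodd
  replace ha : Odd a := mod_cast ha
  have hrec := jacobiSym_mul_jacobiSym_comm (Int.natAbs_odd.mpr hb) ha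
    (Int.isCoprime_iff_nat_coprime.mp hab).symm
  rcases b.natAbs_eq with hbn | hbn <;> set n := b.natAbs <;> rw [hbn] at hab4 ⊢
  · rw [jacobiSym.neg _ ha, mul_assoc, hrec]
    rcases Nat.odd_mod_four_iff.mp (Nat.odd_iff.mp ha) with ha4 | ha4
    · rw [if_neg (by omega), ZMod.χ₄_nat_one_mod_four ha4, one_mul]
    · have hn4 : n % 4 = 3 := by
        rw [Int.mul_emod, show (a : ℤ) % 4 = 3 by omega] at hab4
        omega
      rw [if_pos ⟨hn4, ha4⟩, ZMod.χ₄_nat_three_mod_four ha4]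
      norm_num
  · rw [neg_neg, hrec, if_neg]
    rintro ⟨hn4, ha4⟩
    rw [Int.mul_emod, show (a : ℤ) % 4 = 3 by omega] at hab4
    omega

theorem sum_addHilbertSym_eq_zero {m : ℤ} (hm : Squarefree m) (hm4 : m % 4 = 1) {d : ℕ}
    (hd : (d : ℤ) ∣ m) : ∑ p ∈ m.natAbs.primeFactors, addHilbertSym m d p = 0 := by
  obtain ⟨m, rfl⟩ := hd
  have hcop : IsCoprime (d : ℤ) m := (squarefree_mul_iff.mp hm).1.isCoprime
  have hsq_d : Squarefree (d : ℤ) := hm.of_mul_left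
  have hsq_m : Squarefree m.natAbs := Int.squarefree_natAbs.mpr hm.of_mul_right
  have hcop_nat : d.Coprime m.natAbs := Int.isCoprime_iff_gcd_eq_one.mp hcop
  have sum_d : ∑ p ∈ d.primeFactors, addHilbertSym (d * m) d p =
      ∑ p ∈ d.primeFactors, aLeg (-m) p := by
    refine Finset.sum_congr rfl fun p hp ↦ ?_
    have : Fact p.Prime := ⟨Nat.prime_of_mem_primeFactors hp⟩
    simpa using addHilbertSym_mul_mul hsq_d (mod_cast Nat.dvd_of_mem_primeFactors hp) m 1
  have sum_m : ∑ p ∈ m.natAbs.primeFactors, addHilbertSym (d * m) d p =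
      ∑ p ∈ m.natAbs.primeFactors, aLeg d p := by
    refine Finset.sum_congr rfl fun p hp ↦ addHilbertSym_of_not_dvd fun hpd ↦ ?_
    exact Nat.not_coprime_of_dvd_of_dvd (Nat.prime_of_mem_primeFactors hp).one_lt
      (mod_cast hpd) (Nat.dvd_of_mem_primeFactors hp) hcop_nat
  apply signChar_injective
  rw [Int.natAbs_mul, Int.natAbs_natCast, hcop_nat.primeFactors_mul,
    Finset.sum_union hcop_nat.disjoint_primeFactors, sum_d, sum_m, AddChar.map_add_eq_mul,
    signChar_sum_aLeg (Int.squarefree_natCast.mp hsq_d) hcop.symm.neg_left,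
    signChar_sum_aLeg hsq_m (Nat.isCoprime_iff_coprime.mpr hcop_nat),
    jacobiSym_neg_mul_jacobiSym_natAbs hm4 hcop, AddChar.map_zero_eq_one]

end Symbols

section NormForm

lemma exists_dvd_sq_sub_of_squarefree {n a : ℤ} (hn : Squarefree n)
    (h : ∀ p : ℕ, p.Prime → (p : ℤ) ∣ n → aLeg a p = 0) : ∃ u, n ∣ u ^ 2 - a := by
  suffices ∀ k : ℕ, Squarefree k → (∀ p : ℕ, p.Prime → p ∣ k → aLeg a p = 0) →
      IsSquare (a : ZMod k) by
    obtain ⟨r, hr⟩ := this n.natAbs (Int.squarefree_natAbs.mpr hn)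
      fun p hp hpn ↦ h p hp (Int.natCast_dvd.mpr hpn)
    obtain ⟨u, rfl⟩ := ZMod.intCast_surjective r
    refine ⟨u, Int.natAbs_dvd.mp ((ZMod.intCast_zmod_eq_zero_iff_dvd _ _).mp ?_)⟩
    rw [Int.cast_sub, hr, Int.cast_pow, sq, sub_self]
  intro k hk hp
  induction k using induction_on_primes with
  | zero => exact absurd rfl hk.ne_zero
  | one => exact ⟨0, Subsingleton.elim _ _⟩
  | prime_mul p k hprime ih =>
    obtain ⟨r, hr⟩ := aLeg_eq_zero_iff.mp (hp p hprime (dvd_mul_right _ _))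
    obtain ⟨s, hs⟩ := ih hk.of_mul_right fun q hq hqk ↦ hp q hq (hqk.mul_left _)
    let e := ZMod.chineseRemainder (Nat.coprime_of_squarefree_mul hk)
    refine ⟨e.symm (r, s), e.injective ?_⟩
    rw [map_mul, e.apply_symm_apply, map_intCast]
    exact Prod.ext hr hs

lemma dvd_and_dvd_of_sq_sub_mul_sq {R : Type*} [CommRing R] [IsDomain R] {π m d X Y Z : R}
    (hπ : Prime π) (hm : π ∣ m) (hm2 : ¬ π * π ∣ m) (h : X ^ 2 - m * Y ^ 2 = d * Z ^ 2)
    (hZ : π ∣ Z) : π ∣ X ∧ π ∣ Y := by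
  obtain ⟨m, rfl⟩ := hm
  obtain ⟨Z, rfl⟩ := hZ
  obtain ⟨X, rfl⟩ : π ∣ X :=
    hπ.dvd_of_dvd_pow (n := 2) ⟨m * Y ^ 2 + d * π * Z ^ 2, by linear_combination h⟩
  refine ⟨dvd_mul_right _ _, hπ.dvd_of_dvd_pow (n := 2) ((hπ.dvd_mul.mp ?_).resolve_left
    fun hπm ↦ hm2 (mul_dvd_mul_left π hπm))⟩
  exact ⟨X ^ 2 - d * Z ^ 2, mul_left_cancel₀ hπ.ne_zero (by linear_combination -h)⟩

lemma exists_primitive_sq_sub_mul_sq {m d : ℤ} {u v : ℚ} (h : u ^ 2 - m * v ^ 2 = d) :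
    ∃ X Y Z : ℤ, X ^ 2 - m * Y ^ 2 = d * Z ^ 2 ∧
      ∀ k : ℤ, k ∣ X → k ∣ Y → k ∣ Z → IsUnit k := by
  set Z := u.den.lcm v.den
  have hZ0 : (Z : ℚ) ≠ 0 := mod_cast Nat.lcm_ne_zero u.den_ne_zero v.den_ne_zero
  have clear_den {q : ℚ} (hq : q.den ∣ Z) : ∃ X : ℤ, (X : ℚ) = q * Z := by
    obtain ⟨t, ht⟩ := hq
    exact ⟨q.num * t, by rw [ht, Nat.cast_mul, ← mul_assoc, Rat.mul_den_eq_num]; push_cast; rfl⟩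
  have den_dvd {q : ℚ} {k X' Z' : ℤ} (hX : ((k * X' : ℤ) : ℚ) = q * Z) (hZ : (Z : ℤ) = k * Z') :
      (q.den : ℤ) ∣ Z' := by
    have hZ' : (Z : ℚ) = k * Z' := mod_cast hZ
    rw [hZ', mul_ne_zero_iff] at hZ0
    have hq : q = X' / Z' := by
      rw [eq_div_iff hZ0.2]
      apply mul_left_cancel₀ hZ0.1
      push_cast at hX
      linear_combination -hX - q * hZ'
    rw [hq, ← Rat.divInt_eq_div]
    exact Rat.den_dvd X' Z'
  obtain ⟨X, hX⟩ := clear_den (Nat.dvd_lcm_left u.den v.den)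
  obtain ⟨Y, hY⟩ := clear_den (Nat.dvd_lcm_right u.den v.den)
  refine ⟨X, Y, Z, ?_, ?_⟩
  · have : (X ^ 2 - m * Y ^ 2 : ℚ) = d * Z ^ 2 := by
      rw [hX, hY]
      linear_combination (Z : ℚ) ^ 2 * h
    exact_mod_cast this
  · rintro k ⟨X', rfl⟩ ⟨Y', rfl⟩ ⟨Z', hZ'⟩
    have hdvd : (Z : ℤ) ∣ Z' := by
      rw [Int.natCast_dvd]
      exact Nat.lcm_dvd (Int.natCast_dvd.mp (den_dvd hX hZ')) (Int.natCast_dvd.mp (den_dvd hY hZ'))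
    obtain ⟨t, ht⟩ := hdvd
    refine .of_mul_eq_one t (mul_left_cancel₀ (a := (Z : ℤ)) (mod_cast hZ0) ?_)
    rw [ht] at hZ'
    linear_combination -hZ'

lemma addHilbertSym_eq_zero_of_sq_sub_mul_sq {m d X Y Z : ℤ} {p : ℕ} (hp : p.Prime)
    (hpm : (p : ℤ) ∣ m) (hpZ : ¬ (p : ℤ) ∣ Z) (h : X ^ 2 - m * Y ^ 2 = d * Z ^ 2) :
    addHilbertSym m d p = 0 := by
  have : Fact p.Prime := ⟨hp⟩
  have hp0 : (p : ℤ) ≠ 0 := mod_cast hp.ne_zero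
  have hZ0 : (Z : ZMod p) ≠ 0 := by rwa [Ne, ZMod.intCast_zmod_eq_zero_iff_dvd]
  obtain ⟨m, rfl⟩ := hpm
  by_cases hpd : (p : ℤ) ∣ d
  · obtain ⟨d, rfl⟩ := hpd
    obtain ⟨X, rfl⟩ : (p : ℤ) ∣ X := (Nat.prime_iff_prime_int.mp hp).dvd_of_dvd_pow (n := 2)
      ⟨m * Y ^ 2 + d * Z ^ 2, by linear_combination h⟩
    have hdiv : p * X ^ 2 - m * Y ^ 2 = d * Z ^ 2 :=
      mul_left_cancel₀ hp0 (by linear_combination h)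
    have hmod := congrArg (Int.cast : ℤ → ZMod p) hdiv
    rw [addHilbertSym, if_pos (dvd_mul_right _ _), Int.mul_ediv_cancel_left _ hp0,
      Int.mul_ediv_cancel_left _ hp0, aLeg_eq_zero_iff]
    refine ⟨m * Y / Z, ?_⟩
    push_cast [CharP.cast_eq_zero] at hmod ⊢
    field_simp
    linear_combination (m : ZMod p) * hmod
  · have hmod := congrArg (Int.cast : ℤ → ZMod p) h
    rw [addHilbertSym_of_not_dvd hpd, aLeg_eq_zero_iff]
    refine ⟨X / Z, ?_⟩
    push_cast [CharP.cast_eq_zero] at hmod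
    field_simp
    linear_combination -hmod

lemma addHilbertSym_eq_zero_of_rat_sq_sub {m d : ℤ} (hm : Squarefree m) {u v : ℚ}
    (h : u ^ 2 - m * v ^ 2 = d) {p : ℕ} (hp : p.Prime) (hpm : (p : ℤ) ∣ m) :
    addHilbertSym m d p = 0 := by
  have hp_int := Nat.prime_iff_prime_int.mp hp
  obtain ⟨X, Y, Z, hXYZ, hprim⟩ := exists_primitive_sq_sub_mul_sq h
  refine addHilbertSym_eq_zero_of_sq_sub_mul_sq hp hpm (fun hpZ ↦ ?_) hXYZ
  obtain ⟨hpX, hpY⟩ := dvd_and_dvd_of_sq_sub_mul_sq hp_int hpm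
    (fun h ↦ hp_int.not_isUnit (hm p h)) hXYZ hpZ
  exact hp_int.not_isUnit (hprim p hpX hpY hpZ)

lemma eq_one_of_mul_sq_eq_sq {m x y : ℤ} (hm : Squarefree m) (hy : y ≠ 0)
    (h : m * y ^ 2 = x ^ 2) : m = 1 := by
  obtain ⟨k, rfl⟩ : y ∣ x := (Int.pow_dvd_pow_iff two_ne_zero).mp ⟨m, by rw [← h, mul_comm]⟩
  have hmk : m = k * k := mul_right_cancel₀ (pow_ne_zero 2 hy) (by rw [h]; ring)
  rcases Int.isUnit_iff.mp (hm k (hmk ▸ dvd_rfl)) with rfl | rfl <;> simpa using hmk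

lemma exists_rat_sq_sub_mul_sq_of_ternary_zero {g m d x y z : ℤ} (hm : Squarefree (g * m))
    (hne : x ≠ 0 ∨ y ≠ 0 ∨ z ≠ 0) (h : g * x ^ 2 - m * y ^ 2 - d * z ^ 2 = 0) :
    ∃ u v : ℚ, u ^ 2 - (g * m : ℤ) * v ^ 2 = (g * d : ℤ) := by
  by_cases hz : z = 0
  · subst hz
    have hgm : g * m * y ^ 2 = (g * x) ^ 2 := by linear_combination -g * h
    have hy : y ≠ 0 := by
      rintro rfl
      obtain rfl : x = 0 := by simpa [hm.of_mul_left.ne_zero] using hgm.symm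
      simp at hne
    rw [eq_one_of_mul_sq_eq_sq hm hy hgm]
    exact ⟨(g * d + 1) / 2, (g * d - 1) / 2, by push_cast; ring⟩
  · have hz' : (z : ℚ) ≠ 0 := mod_cast hz
    refine ⟨g * x / z, y / z, ?_⟩
    have h' := congrArg (Int.cast : ℤ → ℚ) h
    push_cast at h' ⊢
    field_simp
    linear_combination (g : ℚ) * h'

lemma exists_ternary_zero_of_addHilbertSym_eq_zero {g m d : ℤ} (hm : Squarefree (g * m))
    (hd : Squarefree (g * d)) (hmd : IsCoprime m d) (hgd : 0 < g * d) (hd2 : d ∣ 2)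
    (h : ∀ p : ℕ, p.Prime → (p : ℤ) ∣ g * m → addHilbertSym (g * m) (g * d) p = 0) :
    ∃ x y z : ℤ, (x ≠ 0 ∨ y ≠ 0 ∨ z ≠ 0) ∧ g * x ^ 2 - m * y ^ 2 - d * z ^ 2 = 0 := by
  obtain ⟨hgm_rel, hsq_g, hsq_m⟩ := squarefree_mul_iff.mp hm
  have hgd_cop : IsCoprime g d := (squarefree_mul_iff.mp hd).1.isCoprime
  have hsq : Squarefree (g * -m * -d) := by
    rw [mul_neg, mul_neg, neg_mul, neg_neg]
    exact squarefree_mul_iff.mpr ⟨(hgd_cop.mul_left hmd).isRelPrime, hm, hd.of_mul_right⟩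
  have hA : ∃ u, g ∣ u ^ 2 + -m * -d := by
    refine (exists_dvd_sq_sub_of_squarefree (a := -(m * d)) hsq_g fun p hp hpg ↦ ?_).imp
      fun u hu ↦ by simpa using hu
    have : Fact p.Prime := ⟨hp⟩
    rw [← addHilbertSym_mul_mul hsq_g hpg, h p hp (hpg.mul_right _)]
  have hB : ∃ v, -m ∣ v ^ 2 + g * -d := by
    refine (exists_dvd_sq_sub_of_squarefree (a := g * d) hsq_m fun p hp hpm ↦ ?_).imp
      fun v hv ↦ by simpa [sub_eq_add_neg] using hv
    have hpgd : ¬ (p : ℤ) ∣ g * d := fun hpgd ↦ (Nat.prime_iff_prime_int.mp hp).not_isUnit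
      ((hgm_rel.isCoprime.symm.mul_right hmd).isUnit_of_dvd' hpm hpgd)
    rw [← addHilbertSym_of_not_dvd hpgd, h p hp (hpm.mul_left _)]
  have hC : ∃ w, -d ∣ w ^ 2 + g * -m := by
    refine ⟨g * m, neg_dvd.mpr (hd2.trans ?_)⟩
    rw [show (g * m) ^ 2 + g * -m = (g * m) * (g * m - 1) by ring]
    exact (Int.even_mul_pred_self _).two_dvd
  obtain ⟨x, y, z, hne, hxyz⟩ := exists_ternary_zero hsq (by linarith) hA hB hC
  exact ⟨x, y, z, hne, by linear_combination hxyz⟩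

theorem exists_rat_sq_sub_mul_sq_iff {m d : ℤ} (hm : Squarefree m) (hd : Squarefree d)
    (hd0 : 0 < d) (hdm : d ∣ 2 * m) :
    (∃ u v : ℚ, u ^ 2 - m * v ^ 2 = d) ↔
      ∀ p : ℕ, p.Prime → (p : ℤ) ∣ m → addHilbertSym m d p = 0 := by
  refine ⟨fun ⟨u, v, huv⟩ p hp hpm ↦ addHilbertSym_eq_zero_of_rat_sq_sub hm huv hp hpm, fun h ↦ ?_⟩
  obtain ⟨g, m, d, hmd, rfl, rfl⟩ : ∃ g m' d', IsCoprime m' d' ∧ m = g * m' ∧ d = g * d' := by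
    obtain ⟨m', d', hcop, hm_eq, hd_eq⟩ :=
      Int.exists_gcd_one (Int.gcd_pos_of_ne_zero_left d hm.ne_zero)
    exact ⟨_, m', d', Int.isCoprime_iff_gcd_eq_one.mpr hcop, hm_eq.trans (mul_comm _ _),
      hd_eq.trans (mul_comm _ _)⟩
  have hd2 : d ∣ 2 := by
    refine hmd.symm.dvd_of_dvd_mul_right ((mul_dvd_mul_iff_left hm.of_mul_left.ne_zero).mp ?_)
    rwa [mul_left_comm]
  obtain ⟨x, y, z, hne, hxyz⟩ := exists_ternary_zero_of_addHilbertSym_eq_zero hm hd hmd hd0 hd2 h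
  exact exists_rat_sq_sub_mul_sq_of_ternary_zero hm hne hxyz

end NormForm

section Row

lemma aLeg_pow_val (a : ℤ) (p : ℕ) (x : ZMod 2) : aLeg (a ^ x.val) p = aLeg a p * x := by
  obtain rfl | rfl := (by decide : ∀ x : ZMod 2, x = 0 ∨ x = 1) x
  · simp [aLeg]
  · simp [ZMod.val_one]

lemma aLeg_neg_one_pow_half {p : ℕ} [hp : Fact p.Prime] :
    aLeg ((-1) ^ ((p - 1) / 2)) p = aLeg (-1) p := by
  rcases hp.out.eq_two_or_odd with rfl | hodd
  · simp only [aLeg_two]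
  rcases Nat.even_or_odd ((p - 1) / 2) with heven | hodd_half
  · have hp4 : p % 4 ≠ 3 := by
      rw [Nat.even_iff] at heven
      omega
    rw [heven.neg_one_pow, aLeg_eq_zero_iff.mpr (by simp), eq_comm, aLeg_eq_zero_iff]
    simpa using ZMod.exists_sq_eq_neg_one_iff.mpr hp4
  · rw [hodd_half.neg_one_pow]

lemma aLeg_ediv_signed_prime {p : ℕ} [hp : Fact p.Prime] {D : ℤ} (hpD : (p : ℤ) ∣ D)
    (hDp : ((D / p : ℤ) : ZMod p) ≠ 0) :
    aLeg (D / ((-1) ^ ((p - 1) / 2) * p)) p = aLeg (-(D / p)) p := by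
  have hsign : ((-1) ^ ((p - 1) / 2) * (-1) ^ ((p - 1) / 2) : ℤ) = 1 := by
    rw [← mul_pow, neg_mul_neg, one_mul, one_pow]
  obtain ⟨m, rfl⟩ := hpD
  have hp0 : (p : ℤ) ≠ 0 := mod_cast hp.out.ne_zero
  have hquot : p * m / ((-1) ^ ((p - 1) / 2) * p) = (-1) ^ ((p - 1) / 2) * m :=
    Int.ediv_eq_of_eq_mul_right (mul_ne_zero (by simp) hp0)
      (by linear_combination (-p * m : ℤ) * hsign)
  rw [hquot, Int.mul_ediv_cancel_left _ hp0] at *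
  rw [aLeg_mul (by simp) hDp, aLeg_neg_one_pow_half, ← aLeg_mul (by simp) hDp, neg_one_mul]

lemma addHilbertSym_pow_val_mul {p : ℕ} [hp : Fact p.Prime] {m n : ℤ}
    (hmp : ((m / p : ℤ) : ZMod p) ≠ 0) (hn : (n : ZMod p) ≠ 0) (x : ZMod 2) :
    addHilbertSym m (p ^ x.val * n) p = aLeg (-(m / p)) p * x + aLeg n p := by
  obtain rfl | rfl := (by decide : ∀ x : ZMod 2, x = 0 ∨ x = 1) x
  · rw [ZMod.val_zero, pow_zero, one_mul, mul_zero, zero_add, addHilbertSym_of_not_dvd]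
    rwa [← ZMod.intCast_zmod_eq_zero_iff_dvd]
  · rw [ZMod.val_one, pow_one, mul_one, addHilbertSym, if_pos (dvd_mul_right _ _),
      Int.mul_ediv_cancel_left _ (mod_cast hp.out.ne_zero), aLeg_mul (by simpa using hmp) hn]

lemma intCast_ediv_ne_zero {p : ℕ} [hp : Fact p.Prime] {m : ℤ} (hpm : (p : ℤ) ∣ m)
    (hpm2 : ¬ (p : ℤ) ^ 2 ∣ m) : ((m / p : ℤ) : ZMod p) ≠ 0 := by
  obtain ⟨m, rfl⟩ := hpm
  rw [Int.mul_ediv_cancel_left _ (mod_cast hp.out.ne_zero), Ne,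
    ZMod.intCast_zmod_eq_zero_iff_dvd]
  exact fun h ↦ hpm2 (by simpa [sq] using mul_dvd_mul_left (p : ℤ) h)

theorem redeiMatrix_mulVec_apply {D : ℤ} {t : ℕ} {p : Fin t → ℕ} (hp : ∀ i, (p i).Prime)
    (hinj : Function.Injective p) (X : Fin t → ZMod 2) (i : Fin (t - 1))
    (hpD : (p (i.castLE (t.sub_le 1)) : ℤ) ∣ D)
    (hpD2 : ¬ (p (i.castLE (t.sub_le 1)) : ℤ) ^ 2 ∣ D) :
    (redeiMatrix D t p).mulVec X i =
      addHilbertSym D (∏ j, p j ^ (X j).val : ℕ) (p (i.castLE (t.sub_le 1))) := by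
  set i' := i.castLE (t.sub_le 1) with hi'
  have : Fact (p i').Prime := ⟨hp i'⟩
  have hDp := intCast_ediv_ne_zero hpD hpD2
  have hunit : ∀ j ∈ Finset.univ.erase i', ((p j ^ (X j).val : ℤ) : ZMod (p i')) ≠ 0 := by
    intro j hj
    push_cast
    refine pow_ne_zero _ fun h ↦ Finset.ne_of_mem_erase hj ?_
    rw [ZMod.natCast_eq_zero_iff, Nat.prime_dvd_prime_iff_eq (hp _) (hp _)] at h
    exact hinj h.symm
  have diagonal : redeiMatrix D t p i i' = aLeg (-(D / p i')) (p i') := by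
    rw [← aLeg_ediv_signed_prime hpD hDp]
    simp [redeiMatrix, hi']
  have off_diagonal : ∀ j ∈ Finset.univ.erase i', redeiMatrix D t p i j = aLeg (p j) (p i') := by
    intro j hj
    have hij : (i : ℕ) ≠ j := fun h ↦ Finset.ne_of_mem_erase hj (Fin.ext h.symm)
    simp [redeiMatrix, hij, hi']
  push_cast
  rw [← Finset.mul_prod_erase _ _ (Finset.mem_univ i'),
    addHilbertSym_pow_val_mul hDp (by simpa using Finset.prod_ne_zero_iff.mpr hunit),
    aLeg_prod _ _ hunit, Matrix.mulVec, dotProduct,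
    ← Finset.add_sum_erase _ _ (Finset.mem_univ i'), diagonal]
  congr 1
  exact Finset.sum_congr rfl fun j hj ↦ by rw [off_diagonal j hj, aLeg_pow_val]

end Row

section QuadraticAlgebra

open Algebra Module

section Ring

variable {R S : Type*} [CommRing R] [StrongRankCondition R] [CommRing S] [Algebra R S]
  [IsQuadraticExtension R S]

lemma exists_fin_two_basis (R S : Type*) [CommRing R] [StrongRankCondition R] [CommRing S]
    [Algebra R S] [IsQuadraticExtension R S] : Nonempty (Basis (Fin 2) R S) :=
  ⟨finBasisOfFinrankEq R S (IsQuadraticExtension.finrank_eq_two R S)⟩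

lemma sq_eq_trace_smul_sub_norm (z : S) :
    z ^ 2 = trace R S z • z - algebraMap R S (norm R z) := by
  obtain ⟨b⟩ := exists_fin_two_basis R S
  apply leftMulMatrix_injective b
  rw [trace_eq_matrix_trace b, norm_eq_matrix_det b, map_pow, map_sub, map_smul,
    AlgHom.commutes, sq]
  ext i j
  fin_cases i <;> fin_cases j <;>
    simp [Matrix.mul_apply, Matrix.trace_fin_two, Matrix.det_fin_two,
      Matrix.algebraMap_matrix_apply] <;> ring

lemma norm_add_of_isQuadraticExtension (z w : S) :
    norm R (z + w) = norm R z + norm R w + trace R S z * trace R S w - trace R S (z * w) := by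
  obtain ⟨b⟩ := exists_fin_two_basis R S
  simp only [trace_eq_matrix_trace b, norm_eq_matrix_det b, map_add, map_mul,
    Matrix.trace_fin_two, Matrix.det_fin_two, Matrix.mul_apply, Matrix.add_apply,
    Fin.sum_univ_two]
  ring

lemma trace_algebraMap_of_isQuadraticExtension (r : R) :
    trace R S (algebraMap R S r) = 2 * r := by
  rw [trace_algebraMap, IsQuadraticExtension.finrank_eq_two R S, nsmul_eq_mul, Nat.cast_two]

lemma norm_smul_of_isQuadraticExtension (r : R) (z : S) : norm R (r • z) = r ^ 2 * norm R z := by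
  rw [Algebra.smul_def, map_mul, Algebra.norm_algebraMap, IsQuadraticExtension.finrank_eq_two R S]

lemma trace_sq_eq (z : S) : trace R S (z ^ 2) = trace R S z ^ 2 - 2 * norm R z := by
  rw [sq_eq_trace_smul_sub_norm (R := R) z, map_sub, map_smul,
    trace_algebraMap_of_isQuadraticExtension, smul_eq_mul, sq]

lemma two_mul_mul_eq (z w : S) :
    2 * (z * w) = trace R S w • z + trace R S z • w +
      algebraMap R S (trace R S (z * w) - trace R S z * trace R S w) := by
  have h := sq_eq_trace_smul_sub_norm (R := R) (z + w)
  rw [norm_add_of_isQuadraticExtension, map_add] at h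
  have hz := sq_eq_trace_smul_sub_norm (R := R) z
  have hw := sq_eq_trace_smul_sub_norm (R := R) w
  simp only [Algebra.smul_def, map_sub, map_add, map_mul] at h hz hw ⊢
  linear_combination h - hz - hw

lemma trace_mul_sq_add (z w : S) :
    trace R S (z * w) ^ 2 + norm R z * trace R S w ^ 2 + norm R w * trace R S z ^ 2 =
      trace R S z * trace R S w * trace R S (z * w) + 4 * norm R z * norm R w := by
  have h := trace_sq_eq (R := R) (z * w)
  rw [mul_pow, sq_eq_trace_smul_sub_norm (R := R) z, sq_eq_trace_smul_sub_norm (R := R) w,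
    sub_mul, mul_sub, mul_sub, smul_mul_smul_comm, ← map_mul (algebraMap R S), mul_comm (_ • z),
    ← Algebra.smul_def, ← Algebra.smul_def, map_mul (norm R)] at h
  simp only [map_sub, map_smul, trace_algebraMap_of_isQuadraticExtension, smul_eq_mul] at h
  linear_combination -h

lemma discr_pair (z w : S) :
    discr R ![z, w] =
      (trace R S z * trace R S w - trace R S (z * w)) ^ 2 - 4 * norm R z * norm R w := by
  have : discr R ![z, w] = trace R S (z ^ 2) * trace R S (w ^ 2) - trace R S (z * w) ^ 2 := by
    rw [discr_def, Matrix.det_fin_two]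
    simp [traceMatrix_apply, traceForm_apply, sq, mul_comm w z]
  rw [this, trace_sq_eq, trace_sq_eq]
  linear_combination -2 * trace_mul_sq_add (R := R) z w

/-- Writing `z'` for the conjugate `Tr z - z`, the square root is `z w' - z' w`. -/
lemma exists_trace_eq_zero_sq_eq_discr_pair (z w : S) :
    ∃ ω : S, trace R S ω = 0 ∧ ω ^ 2 = algebraMap R S (discr R ![z, w]) := by
  have trace_eq_zero : trace R S (trace R S w • z - trace R S z • w) = 0 := by
    rw [map_sub, map_smul, map_smul, smul_eq_mul, smul_eq_mul, mul_comm, sub_self]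
  refine ⟨_, trace_eq_zero, ?_⟩
  rw [sq_eq_trace_smul_sub_norm (R := R), trace_eq_zero, zero_smul, zero_sub, ← map_neg, discr_pair,
    sub_eq_add_neg, norm_add_of_isQuadraticExtension, ← neg_smul]
  simp only [norm_smul_of_isQuadraticExtension, smul_mul_smul_comm, map_smul, smul_eq_mul]
  congr 1
  linear_combination -trace_mul_sq_add (R := R) z w

end Ring

theorem exists_norm_eq_iff_of_sq_eq {F L : Type*} [Field F] [Field L] [Algebra F L]
    [IsQuadraticExtension F L] (h2 : (2 : F) ≠ 0) {δ : F} (hδ : δ ≠ 0) {ω : L}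
    (htrace : trace F L ω = 0) (hω : ω ^ 2 = algebraMap F L δ) (d : F) :
    (∃ x : L, norm F x = d) ↔ ∃ u v : F, u ^ 2 - δ * v ^ 2 = d := by
  have norm_ω : norm F ω = -δ := by
    apply (algebraMap F L).injective
    have h := sq_eq_trace_smul_sub_norm (R := F) ω
    rw [htrace, zero_smul, zero_sub, hω] at h
    rw [map_neg, h, neg_neg]
  have norm_eq (u v : F) : norm F (algebraMap F L u + v • ω) = u ^ 2 - δ * v ^ 2 := by
    rw [norm_add_of_isQuadraticExtension, norm_smul_of_isQuadraticExtension, norm_ω,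
      Algebra.norm_algebraMap, IsQuadraticExtension.finrank_eq_two F L, ← Algebra.smul_def,
      map_smul, map_smul, map_smul, htrace, smul_zero, smul_zero]
    ring
  refine ⟨fun ⟨x, hx⟩ ↦ ?_, fun ⟨u, v, huv⟩ ↦ ⟨_, (norm_eq u v).trans huv⟩⟩
  refine ⟨trace F L x / 2, trace F L (x * ω) / (2 * δ), ?_⟩
  rw [← norm_eq, ← hx]
  congr 1
  have h2L : (2 : L) ≠ 0 := map_ofNat (algebraMap F L) 2 ▸ (map_ne_zero _).mpr h2
  have hδL : algebraMap F L δ ≠ 0 := by simpa using hδ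
  have h := two_mul_mul_eq (R := F) x ω
  rw [htrace, zero_smul, zero_add, mul_zero, sub_zero, Algebra.smul_def] at h
  rw [Algebra.smul_def]
  simp only [map_div₀, map_mul, map_ofNat]
  field_simp
  linear_combination -ω * h + (2 * x - algebraMap F L (trace F L x)) * hω

end QuadraticAlgebra

section QuadraticField

open Algebra Module

lemma exists_squarefree_mul_sq (n : ℤ) : ∃ m c : ℤ, Squarefree m ∧ n = m * c ^ 2 := by
  obtain ⟨m, c, hmc, hm⟩ := Nat.sq_mul_squarefree n.natAbs
  rw [← Int.squarefree_natCast] at hm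
  rcases n.natAbs_eq with hn | hn
  · exact ⟨m, c, hm, by rw [hn, ← hmc]; push_cast; ring⟩
  · exact ⟨-m, c, hm.squarefree_of_dvd (neg_dvd.mpr dvd_rfl), by rw [hn, ← hmc]; push_cast; ring⟩

variable (K : Type*) [Field K] [NumberField K] [IsQuadraticExtension ℚ K]

instance isQuadraticExtension_ringOfIntegers : IsQuadraticExtension ℤ (𝓞 K) where
  finrank_eq_two' := (RingOfIntegers.rank K).trans (IsQuadraticExtension.finrank_eq_two ℚ K)

lemma exists_discr_pair_eq_discr : ∃ z w : 𝓞 K, Algebra.discr ℤ ![z, w] = discr K := by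
  obtain ⟨b⟩ := exists_fin_two_basis ℤ (𝓞 K)
  refine ⟨b 0, b 1, ?_⟩
  rw [← discr_eq_discr K b]
  congr 1
  ext i
  fin_cases i <;> rfl

theorem discr_emod_four_of_isQuadraticExtension : discr K % 4 = 0 ∨ discr K % 4 = 1 := by
  obtain ⟨z, w, hzw⟩ := exists_discr_pair_eq_discr K
  rw [← hzw, discr_pair, mul_assoc, Int.sub_mul_emod_self_left]
  rcases Int.even_or_odd (trace ℤ (𝓞 K) z * trace ℤ (𝓞 K) w - trace ℤ (𝓞 K) (z * w)) with h | h
  · exact .inl (Int.emod_eq_zero_of_dvd (pow_dvd_pow_of_dvd h.two_dvd 2))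
  · exact .inr (Int.sq_mod_four_eq_one_of_odd h)

lemma exists_trace_eq_zero_sq_eq_discr : ∃ ω : 𝓞 K, trace ℤ (𝓞 K) ω = 0 ∧ ω ^ 2 = discr K := by
  obtain ⟨z, w, hzw⟩ := exists_discr_pair_eq_discr K
  simpa [hzw] using exists_trace_eq_zero_sq_eq_discr_pair (R := ℤ) z w

theorem exists_discr_eq_squarefree_mul_sq :
    ∃ m c : ℤ, Squarefree m ∧ c ∣ 2 ∧ discr K = m * c ^ 2 := by
  obtain ⟨m, c, hm, hmc⟩ := exists_squarefree_mul_sq (discr K)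
  obtain ⟨hm0, hc0⟩ : m ≠ 0 ∧ c ≠ 0 := by
    simpa only [hmc, mul_ne_zero_iff, pow_ne_zero_iff two_ne_zero] using discr_ne_zero K
  refine ⟨m, c, hm, ?_, hmc⟩
  obtain ⟨ω, htrace, hω⟩ := exists_trace_eq_zero_sq_eq_discr K
  obtain ⟨β, rfl⟩ : (c : 𝓞 K) ∣ ω := by
    rw [← IsIntegrallyClosed.pow_dvd_pow_iff two_ne_zero, hω, hmc]
    exact ⟨m, by push_cast; ring⟩
  have trace_β : trace ℤ (𝓞 K) β = 0 := by
    rw [← zsmul_eq_mul, map_zsmul] at htrace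
    simpa [hc0] using htrace
  have sq_β : β ^ 2 = algebraMap ℤ (𝓞 K) m := by
    apply mul_left_cancel₀ (pow_ne_zero 2 (Int.cast_ne_zero.mpr hc0 : (c : 𝓞 K) ≠ 0))
    rw [← mul_pow, hω, hmc, eq_intCast]
    push_cast
    ring
  have discr_β : Algebra.discr ℤ ![1, β] = 4 * m := by
    have trace_sq_β := trace_sq_eq (R := ℤ) β
    rw [sq_β, trace_algebraMap_of_isQuadraticExtension, trace_β] at trace_sq_β
    rw [discr_pair, one_mul, trace_β, map_one (Algebra.norm ℤ)]
    linarith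
  obtain ⟨b⟩ := exists_fin_two_basis ℤ (𝓞 K)
  have index_sq : ((b.toMatrix ![1, β]).det * c) ^ 2 = 2 ^ 2 := by
    apply mul_left_cancel₀ hm0
    rw [← Basis.toMatrix_map_vecMul b ![1, β], discr_of_matrix_vecMul,
      NumberField.discr_eq_discr, hmc] at discr_β
    linear_combination discr_β
  exact (dvd_mul_left _ _).trans ((Int.pow_dvd_pow_iff two_ne_zero).mp index_sq.dvd)

theorem exists_norm_eq_iff_sq_sub_discr_mul_sq (d : ℚ) :
    (∃ x : K, norm ℚ x = d) ↔ ∃ u v : ℚ, u ^ 2 - discr K * v ^ 2 = d := by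
  obtain ⟨ω, htrace, hω⟩ := exists_trace_eq_zero_sq_eq_discr K
  refine exists_norm_eq_iff_of_sq_eq two_ne_zero (mod_cast discr_ne_zero K) (ω := (ω : K)) ?_ ?_ d
  · rw [← coe_trace_int, htrace, Int.cast_zero]
  · simpa using congrArg (algebraMap (𝓞 K) K) hω

end QuadraticField

/-- The vector `X_d` of the exponents, modulo `2`, of the primes `p i` in `d`. -/
def exponentVector {ι : Type*} (p : ι → ℕ) (d : ℕ) (i : ι) : ZMod 2 := padicValNat (p i) d

section ExponentVectors

variable {ι : Type*} {p : ι → ℕ}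

lemma pairwise_isRelPrime_prime_pow (hp : ∀ i, (p i).Prime) (hinj : Function.Injective p)
    (e : ι → ℕ) (s : Set ι) : s.Pairwise (Function.onFun IsRelPrime fun i ↦ p i ^ e i) :=
  fun i _ j _ hij ↦ Nat.coprime_iff_isRelPrime.mp
    (.pow _ _ ((Nat.coprime_primes (hp i) (hp j)).mpr (hinj.ne hij)))

lemma pow_val_dvd_self (n : ℕ) (x : ZMod 2) : n ^ x.val ∣ n :=
  (pow_dvd_pow n (Nat.le_of_lt_succ x.val_lt)).trans (pow_one n).dvd

variable [Fintype ι]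

lemma exponentVector_prod_pow_val (hp : ∀ i, (p i).Prime) (hinj : Function.Injective p)
    (X : ι → ZMod 2) : exponentVector p (∏ j, p j ^ (X j).val) = X := by
  classical
  ext i : 1
  rw [exponentVector, ← Nat.factorization_def _ (hp i),
    Nat.factorization_prod_apply fun j _ ↦ pow_ne_zero _ (hp j).ne_zero]
  simp [(hp _).factorization_pow, Finsupp.single_apply, hinj.eq_iff]

lemma squarefree_prod_pow_val (hp : ∀ i, (p i).Prime) (hinj : Function.Injective p)
    (X : ι → ZMod 2) : Squarefree (∏ i, p i ^ (X i).val) :=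
  Finset.squarefree_prod_of_pairwise_isCoprime (pairwise_isRelPrime_prime_pow hp hinj _ _)
    fun i _ ↦ (hp i).prime.squarefree.squarefree_of_dvd (pow_val_dvd_self _ _)

lemma prod_pow_val_dvd (hp : ∀ i, (p i).Prime) (hinj : Function.Injective p) {n : ℤ}
    (hdvd : ∀ i, (p i : ℤ) ∣ n) (X : ι → ZMod 2) : ((∏ i, p i ^ (X i).val : ℕ) : ℤ) ∣ n :=
  Int.natCast_dvd.mpr (Finset.prod_dvd_of_isRelPrime (pairwise_isRelPrime_prime_pow hp hinj _ _)
    fun i _ ↦ (pow_val_dvd_self _ _).trans (Int.natCast_dvd.mp (hdvd i)))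

lemma prod_pow_exponentVector (hp : ∀ i, (p i).Prime) (hinj : Function.Injective p) {d : ℕ}
    (hd : Squarefree d) (hall : ∀ q : ℕ, q.Prime → q ∣ d → ∃ i, p i = q) :
    ∏ i, p i ^ (exponentVector p d i).val = d := by
  have val_exponentVector i : (exponentVector p d i).val = padicValNat (p i) d := by
    refine ZMod.val_cast_of_lt (Nat.lt_succ_of_le ?_)
    rw [← Nat.factorization_def _ (hp i)]
    exact hd.natFactorization_le_one _
  have hprod := squarefree_prod_pow_val hp hinj (exponentVector p d)
  refine (Nat.Squarefree.ext_iff hprod hd).mpr fun q hq ↦ ?_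
  simp only [val_exponentVector, hq.prime.dvd_finsetProd_iff, Finset.mem_univ, true_and]
  constructor
  · rintro ⟨i, hi⟩
    obtain rfl := (Nat.prime_dvd_prime_iff_eq hq (hp i)).mp (hq.dvd_of_dvd_pow hi)
    refine dvd_of_one_le_padicValNat (Nat.one_le_iff_ne_zero.mpr fun h0 ↦ ?_)
    exact hq.not_dvd_one (by rwa [h0, pow_zero] at hi)
  · intro hqd
    obtain ⟨i, rfl⟩ := hall q hq hqd
    have : Fact (p i).Prime := ⟨hp i⟩
    exact ⟨i, dvd_pow_self _ (Nat.one_le_iff_ne_zero.mp (one_le_padicValNat_of_dvd hd.ne_zero hqd))⟩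

end ExponentVectors

section Odot

open Algebra

lemma dOdot_eq_div_gcd_mul_div_gcd (d₁ d₂ : ℕ) :
    dOdot d₁ d₂ = d₁ / d₁.gcd d₂ * (d₂ / d₁.gcd d₂) := by
  rw [Nat.div_mul_div_comm (d₁.gcd_dvd_left d₂) (d₁.gcd_dvd_right d₂), dOdot, sq]

lemma dOdot_mul_gcd_sq (d₁ d₂ : ℕ) : dOdot d₁ d₂ * d₁.gcd d₂ ^ 2 = d₁ * d₂ := by
  rw [dOdot_eq_div_gcd_mul_div_gcd, sq, mul_mul_mul_comm,
    Nat.div_mul_cancel (d₁.gcd_dvd_left d₂), Nat.div_mul_cancel (d₁.gcd_dvd_right d₂)]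

lemma dOdot_dvd {d₁ d₂ : ℕ} {n : ℤ} (h₁ : (d₁ : ℤ) ∣ n) (h₂ : (d₂ : ℤ) ∣ n) :
    (dOdot d₁ d₂ : ℤ) ∣ n := by
  rw [Int.natCast_dvd] at h₁ h₂ ⊢
  refine dvd_trans ?_ (Nat.lcm_dvd h₁ h₂)
  rw [dOdot_eq_div_gcd_mul_div_gcd, Nat.lcm, Nat.mul_div_assoc _ (d₁.gcd_dvd_right d₂)]
  exact mul_dvd_mul_right (Nat.div_dvd_of_dvd (d₁.gcd_dvd_left d₂)) _

lemma squarefree_dOdot {d₁ d₂ : ℕ} (h₁ : Squarefree d₁) (h₂ : Squarefree d₂) :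
    Squarefree (dOdot d₁ d₂) := by
  rw [dOdot_eq_div_gcd_mul_div_gcd,
    Nat.squarefree_mul (Nat.coprime_div_gcd_div_gcd (Nat.gcd_pos_of_pos_left _ h₁.ne_zero.bot_lt))]
  exact ⟨h₁.squarefree_of_dvd (Nat.div_dvd_of_dvd (d₁.gcd_dvd_left d₂)),
    h₂.squarefree_of_dvd (Nat.div_dvd_of_dvd (d₁.gcd_dvd_right d₂))⟩

lemma exponentVector_dOdot {ι : Type*} {p : ι → ℕ} (hp : ∀ i, (p i).Prime) {d₁ d₂ : ℕ}
    (h₁ : d₁ ≠ 0) (h₂ : d₂ ≠ 0) :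
    exponentVector p (dOdot d₁ d₂) = exponentVector p d₁ + exponentVector p d₂ := by
  ext i : 1
  have : Fact (p i).Prime := ⟨hp i⟩
  have hmul := dOdot_mul_gcd_sq d₁ d₂
  obtain ⟨hodot, hgcd⟩ : dOdot d₁ d₂ ≠ 0 ∧ d₁.gcd d₂ ^ 2 ≠ 0 := by
    rw [← mul_ne_zero_iff, hmul]
    exact mul_ne_zero h₁ h₂
  have hval := congrArg (padicValNat (p i)) hmul
  rw [padicValNat.mul hodot hgcd, padicValNat.mul h₁ h₂,
    padicValNat.pow] at hval
  have hcast := congrArg (Nat.cast (R := ZMod 2)) hval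
  push_cast at hcast
  rwa [CharTwo.two_eq_zero (R := ZMod 2), zero_mul, add_zero] at hcast

lemma exists_norm_eq_dOdot {F L : Type*} [Field F] [CharZero F] [Field L] [Algebra F L]
    [IsQuadraticExtension F L] {d₁ d₂ : ℕ} (hd₁ : d₁ ≠ 0)
    (h₁ : ∃ x : L, norm F x = d₁) (h₂ : ∃ x : L, norm F x = d₂) :
    ∃ x : L, norm F x = dOdot d₁ d₂ := by
  obtain ⟨x₁, hx₁⟩ := h₁
  obtain ⟨x₂, hx₂⟩ := h₂
  have hgcd : (d₁.gcd d₂ : F) ≠ 0 :=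
    Nat.cast_ne_zero.mpr (ne_zero_of_dvd_ne_zero hd₁ (d₁.gcd_dvd_left d₂))
  refine ⟨(d₁.gcd d₂ : F)⁻¹ • (x₁ * x₂), ?_⟩
  rw [norm_smul_of_isQuadraticExtension, map_mul, hx₁, hx₂, inv_pow,
    inv_mul_eq_iff_eq_mul₀ (pow_ne_zero 2 hgcd), mul_comm _ (dOdot d₁ d₂ : F)]
  exact_mod_cast (dOdot_mul_gcd_sq d₁ d₂).symm

end Odot

section NormResidue

open Algebra

lemma addHilbertSym_eq_zero_of_forall_ne {m : ℤ} (hm : Squarefree m) (hm4 : m % 4 = 1) {d q : ℕ}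
    (hd : (d : ℤ) ∣ m) (hq : q.Prime) (hqm : (q : ℤ) ∣ m)
    (h : ∀ p : ℕ, p.Prime → (p : ℤ) ∣ m → p ≠ q → addHilbertSym m d p = 0) :
    addHilbertSym m d q = 0 := by
  rw [← sum_addHilbertSym_eq_zero hm hm4 hd, Finset.sum_eq_single_of_mem q]
  · exact Nat.mem_primeFactors.mpr
      ⟨hq, Int.natCast_dvd.mp hqm, Int.natAbs_ne_zero.mpr hm.ne_zero⟩
  · exact fun p hp hpq ↦ h p (Nat.prime_of_mem_primeFactors hp)
      (Int.natCast_dvd.mpr (Nat.dvd_of_mem_primeFactors hp)) hpq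

lemma not_prime_dvd_of_dvd_two {p : ℕ} (hp : p.Prime) (hp2 : p ≠ 2) {c : ℤ}
    (hc : c ∣ 2) : ¬ (p : ℤ) ∣ c := fun hpc ↦
  hp2 ((Nat.prime_dvd_prime_iff_eq hp Nat.prime_two).mp (Int.natCast_dvd_natCast.mp (hpc.trans hc)))

lemma forall_addHilbertSym_mul_sq_iff {m c d : ℤ} (hc : c ∣ 2) :
    (∀ p : ℕ, p.Prime → (p : ℤ) ∣ m * c ^ 2 → addHilbertSym (m * c ^ 2) d p = 0) ↔
      ∀ p : ℕ, p.Prime → (p : ℤ) ∣ m → addHilbertSym m d p = 0 := by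
  refine forall₂_congr fun p hp ↦ ?_
  rcases eq_or_ne p 2 with rfl | hp2
  · simp only [addHilbertSym_two, implies_true]
  have : Fact p.Prime := ⟨hp⟩
  have hpc : ¬ (p : ℤ) ∣ c := not_prime_dvd_of_dvd_two hp hp2 hc
  have hcop : IsCoprime (p : ℤ) (c ^ 2) :=
    ((Nat.prime_iff_prime_int.mp hp).coprime_iff_not_dvd.mpr hpc).pow_right
  have hdvd : (p : ℤ) ∣ m * c ^ 2 ↔ (p : ℤ) ∣ m :=
    ⟨hcop.dvd_of_dvd_mul_right, fun hpm ↦ hpm.mul_right _⟩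
  rw [hdvd]
  refine forall_congr' fun hpm ↦ ?_
  rw [addHilbertSym_mul_sq hpm ((ZMod.intCast_zmod_eq_zero_iff_dvd c p).not.mpr hpc)]

variable {K : Type*} [Field K] [NumberField K] [IsQuadraticExtension ℚ K]

lemma not_sq_dvd_discr {p : ℕ} (hp : p.Prime) (hp2 : p ≠ 2) : ¬ (p : ℤ) ^ 2 ∣ discr K := by
  obtain ⟨m, c, hm, hc, hmc⟩ := exists_discr_eq_squarefree_mul_sq K
  have hp' := Nat.prime_iff_prime_int.mp hp
  have hcop : IsCoprime ((p : ℤ) ^ 2) (c ^ 2) :=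
    (hp'.coprime_iff_not_dvd.mpr (not_prime_dvd_of_dvd_two hp hp2 hc)).pow
  intro hpD
  exact hp'.not_isUnit (hm _ (sq (p : ℤ) ▸ hcop.dvd_of_dvd_mul_right (hmc ▸ hpD)))

lemma squarefree_discr_of_odd (hodd : ¬ 2 ∣ discr K) : Squarefree (discr K) := by
  obtain ⟨m, c, hm, hc, hmc⟩ := exists_discr_eq_squarefree_mul_sq K
  rw [hmc] at hodd ⊢
  rcases Int.prime_two.irreducible.dvd_iff.mp hc with hunit | hassoc
  · rwa [Int.isUnit_sq hunit, mul_one]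
  · exact absurd (dvd_mul_of_dvd_right (dvd_pow hassoc.dvd two_ne_zero) m) hodd

theorem exists_norm_eq_iff_addHilbertSym {d : ℕ} (hd : Squarefree d) (hdD : (d : ℤ) ∣ discr K) :
    (∃ x : K, norm ℚ x = d) ↔
      ∀ p : ℕ, p.Prime → (p : ℤ) ∣ discr K → addHilbertSym (discr K) d p = 0 := by
  obtain ⟨m, c, hm, hc, hmc⟩ := exists_discr_eq_squarefree_mul_sq K
  have hd' : Squarefree (d : ℤ) := Int.squarefree_natCast.mpr hd
  have hdm : (d : ℤ) ∣ 2 * m := by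
    have hdmc : (d : ℤ) ∣ (m * c) ^ 2 := hdD.trans (hmc ▸ ⟨m, by ring⟩)
    rw [mul_comm]
    exact ((hd'.dvd_pow_iff_dvd two_ne_zero).mp hdmc).trans (mul_dvd_mul_left m hc)
  have hc0 : (c : ℚ) ≠ 0 := Int.cast_ne_zero.mpr (ne_zero_of_dvd_ne_zero two_ne_zero hc)
  rw [exists_norm_eq_iff_sq_sub_discr_mul_sq, hmc, forall_addHilbertSym_mul_sq_iff hc,
    ← exists_rat_sq_sub_mul_sq_iff hm hd' (mod_cast hd.ne_zero.bot_lt) hdm]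
  refine exists_congr fun u ↦ (Equiv.mulLeft₀ (c : ℚ) hc0).exists_congr fun v ↦ ?_
  push_cast [Equiv.mulLeft₀_apply]
  rw [mul_pow, mul_assoc]

variable {t : ℕ} {p : Fin t → ℕ}

/-- The symbol at the last prime, which has no row, carries no further condition: it vanishes by
definition if that prime is `2`, and by the product formula if `D` is odd. -/
theorem redeiMatrix_mulVec_eq_zero_iff_exists_norm_eq (hp : ∀ i, (p i).Prime)
    (hinj : Function.Injective p) (hdvd : ∀ i, (p i : ℤ) ∣ discr K)
    (hall : ∀ q : ℕ, q.Prime → (q : ℤ) ∣ discr K → ∃ i, p i = q)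
    (hord : ∀ i : Fin t, p i = 2 → (i : ℕ) = t - 1) (X : Fin t → ZMod 2) :
    (redeiMatrix (discr K) t p).mulVec X = 0 ↔
      ∃ x : K, norm ℚ x = (∏ i, p i ^ (X i).val : ℕ) := by
  have hd : ((∏ i, p i ^ (X i).val : ℕ) : ℤ) ∣ discr K :=
    prod_pow_val_dvd hp hinj hdvd X
  have row_apply (i : Fin (t - 1)) := redeiMatrix_mulVec_apply hp hinj X i (hdvd _)
    (not_sq_dvd_discr (hp _) fun h2 ↦ i.isLt.ne (hord _ h2))
  rw [exists_norm_eq_iff_addHilbertSym (squarefree_prod_pow_val hp hinj X) hd]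
  refine ⟨fun hX q hq hqD ↦ ?_, fun h ↦ funext fun i ↦ (row_apply i).trans (h _ (hp _) (hdvd _))⟩
  have symbol_eq_zero (i : Fin t) (hi : (i : ℕ) ≠ t - 1) :
      addHilbertSym (discr K) (∏ j, p j ^ (X j).val : ℕ) (p i) = 0 :=
    (row_apply ⟨i, by omega⟩).symm.trans (congrFun hX _)
  obtain ⟨i, rfl⟩ := hall q hq hqD
  by_cases hi : (i : ℕ) = t - 1
  · by_cases h2 : p i = 2
    · rw [h2, addHilbertSym_two]
    have hodd : ¬ 2 ∣ discr K := fun heven ↦ by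
      obtain ⟨j, hj⟩ := hall 2 Nat.prime_two heven
      exact h2 (Fin.ext (hi.trans (hord j hj).symm) ▸ hj)
    refine addHilbertSym_eq_zero_of_forall_ne (squarefree_discr_of_odd hodd)
      ((discr_emod_four_of_isQuadraticExtension K).resolve_left (by omega)) hd hq hqD ?_
    intro r hr hrD hri
    obtain ⟨j, rfl⟩ := hall r hr hrD
    exact symbol_eq_zero j fun hj ↦ hri (congrArg p (Fin.ext (hj.trans hi.symm)))
  · exact symbol_eq_zero i hi

end NormResidue

section NormDivisors

variable (K : Type*) [Field K] [NumberField K]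

/-- The set `D(K) ∩ N(K^×)` of positive squarefree divisors of the discriminant that are norms. -/
def normDivisors : Set ℕ :=
  {d | 0 < d ∧ Squarefree d ∧ (d : ℤ) ∣ discr K ∧ ∃ x : K, x ≠ 0 ∧ Algebra.norm ℚ x = (d : ℚ)}

variable {K}

lemma mem_normDivisors_iff {d : ℕ} :
    d ∈ normDivisors K ↔
      Squarefree d ∧ (d : ℤ) ∣ discr K ∧ ∃ x : K, Algebra.norm ℚ x = d := by
  refine ⟨fun ⟨_, hsq, hdvd, x, _, hx⟩ ↦ ⟨hsq, hdvd, x, hx⟩,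
    fun ⟨hsq, hdvd, x, hx⟩ ↦ ⟨hsq.ne_zero.bot_lt, hsq, hdvd, x, ?_, hx⟩⟩
  rw [← Algebra.norm_ne_zero_iff (R := ℚ), hx]
  exact Nat.cast_ne_zero.mpr hsq.ne_zero

lemma dOdot_mem_normDivisors [Algebra.IsQuadraticExtension ℚ K] {d₁ d₂ : ℕ}
    (hd₁ : d₁ ∈ normDivisors K) (hd₂ : d₂ ∈ normDivisors K) : dOdot d₁ d₂ ∈ normDivisors K := by
  rw [mem_normDivisors_iff] at *
  obtain ⟨hsq₁, hdvd₁, hnorm₁⟩ := hd₁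
  obtain ⟨hsq₂, hdvd₂, hnorm₂⟩ := hd₂
  exact ⟨squarefree_dOdot hsq₁ hsq₂, dOdot_dvd hdvd₁ hdvd₂,
    exists_norm_eq_dOdot hsq₁.ne_zero hnorm₁ hnorm₂⟩

end NormDivisors

theorem stmt_5_general (K : Type*) [Field K] [NumberField K]
    (hdeg : Module.finrank ℚ K = 2)
    (D : ℤ) (hD : D = discr K)
    (t : ℕ) (p : Fin t → ℕ) (hp : ∀ i, (p i).Prime) (hinj : Function.Injective p)
    (hdvd : ∀ i, (p i : ℤ) ∣ D)
    (hall : ∀ q : ℕ, q.Prime → (q : ℤ) ∣ D → ∃ i, p i = q)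
    (hord : ∀ i : Fin t, p i = 2 → (i : ℕ) = t - 1)
    (S : Set ℕ)
    (hS : S = {d : ℕ | 0 < d ∧ Squarefree d ∧ (d : ℤ) ∣ D ∧
      ∃ x : K, x ≠ 0 ∧ Algebra.norm ℚ x = (d : ℚ)})
    (φ : ℕ → Fin t → ZMod 2)
    (hφ : φ = fun d i => (padicValNat (p i) d : ZMod 2)) :
    (∀ d ∈ S, (redeiMatrix D t p).mulVec (φ d) = 0) ∧
    (∀ d₁ ∈ S, ∀ d₂ ∈ S, dOdot d₁ d₂ ∈ S ∧ φ (dOdot d₁ d₂) = φ d₁ + φ d₂) ∧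
    (∀ d₁ ∈ S, ∀ d₂ ∈ S, φ d₁ = φ d₂ → d₁ = d₂) ∧
    (∀ X : Fin t → ZMod 2, (redeiMatrix D t p).mulVec X = 0 →
      (∏ i, p i ^ (X i).val) ∈ S ∧ φ (∏ i, p i ^ (X i).val) = X) ∧
    (∀ d ∈ S, ∏ i, p i ^ (φ d i).val = d) := by
  have : Algebra.IsQuadraticExtension ℚ K := ⟨hdeg⟩
  subst hD
  obtain rfl : S = normDivisors K := hS
  obtain rfl : φ = exponentVector p := hφ
  have prod_exponentVector : Set.LeftInvOn (fun X ↦ ∏ i, p i ^ (X i).val) (exponentVector p)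
      (normDivisors K) := fun d ⟨_, hsq, hdD, _⟩ ↦
    prod_pow_exponentVector hp hinj hsq fun q hq hqd ↦
      hall q hq ((Int.natCast_dvd_natCast.mpr hqd).trans hdD)
  have mulVec_eq_zero_iff X :
      (redeiMatrix (discr K) t p).mulVec X = 0 ↔ ∏ i, p i ^ (X i).val ∈ normDivisors K := by
    rw [redeiMatrix_mulVec_eq_zero_iff_exists_norm_eq hp hinj hdvd hall hord, mem_normDivisors_iff]
    simp only [squarefree_prod_pow_val hp hinj, prod_pow_val_dvd hp hinj hdvd, true_and]
  exact ⟨fun d hd ↦ (mulVec_eq_zero_iff _).mpr (Set.mem_of_eq_of_mem (prod_exponentVector hd) hd),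
    fun d₁ hd₁ d₂ hd₂ ↦
      ⟨dOdot_mem_normDivisors hd₁ hd₂, exponentVector_dOdot hp hd₁.1.ne' hd₂.1.ne'⟩,
    fun d₁ hd₁ d₂ hd₂ ↦ prod_exponentVector.injOn hd₁ hd₂,
    fun X hX ↦ ⟨(mulVec_eq_zero_iff X).mp hX, exponentVector_prod_pow_val hp hinj X⟩,
    fun d hd ↦ prod_exponentVector hd⟩

/-- `d ↦ X_d = (v_{p₁}(d), …, v_{p_t}(d))` is a group isomorphism from
`D(K) ∩ N(K^×)` (with `⊙`) onto the kernel `{X : R·X = 0}` of the Rédei matrix, with inverse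
`(x₁, …, x_t) ↦ Π p_i^{x_i}`. -/
theorem stmt_5 (K : Type) [Field K] [NumberField K]
    (hdeg : Module.finrank ℚ K = 2)
    (him : ∀ v : InfinitePlace K, v.IsComplex)
    (D : ℤ) (hD : D = discr K)
    (t : ℕ) (p : Fin t → ℕ) (hp : ∀ i, (p i).Prime) (hinj : Function.Injective p)
    (hdvd : ∀ i, (p i : ℤ) ∣ D)
    (hall : ∀ q : ℕ, q.Prime → (q : ℤ) ∣ D → ∃ i, p i = q)
    (hord : ∀ i : Fin t, p i = 2 → (i : ℕ) = t - 1)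
    (S : Set ℕ)
    (hS : S = {d : ℕ | 0 < d ∧ Squarefree d ∧ (d : ℤ) ∣ D ∧
      ∃ x : K, x ≠ 0 ∧ Algebra.norm ℚ x = (d : ℚ)})
    (φ : ℕ → Fin t → ZMod 2)
    (hφ : φ = fun d i => (padicValNat (p i) d : ZMod 2)) :
    -- φ maps S into the kernel of R
    (∀ d ∈ S, (redeiMatrix D t p).mulVec (φ d) = 0) ∧
    -- φ is a homomorphism for ⊙ (and S is closed under ⊙)
    (∀ d₁ ∈ S, ∀ d₂ ∈ S, dOdot d₁ d₂ ∈ S ∧ φ (dOdot d₁ d₂) = φ d₁ + φ d₂) ∧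
    -- φ is injective on S
    (∀ d₁ ∈ S, ∀ d₂ ∈ S, φ d₁ = φ d₂ → d₁ = d₂) ∧
    -- φ is surjective onto the kernel, with inverse X ↦ Π p_i^{x_i}
    (∀ X : Fin t → ZMod 2, (redeiMatrix D t p).mulVec X = 0 →
      (∏ i, p i ^ (X i).val) ∈ S ∧ φ (∏ i, p i ^ (X i).val) = X) ∧
    -- the inverse formula recovers d
    (∀ d ∈ S, ∏ i, p i ^ (φ d i).val = d) := by
  exact stmt_5_general K hdeg D hD t p hp hinj hdvd hall hord S hS φ hφ
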